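/- arXiv:1603.01956 — 2 statements merged into one kernel-verified Lean document; each statement's English description precedes it below -/
import Mathlib

section
/- Let S be a nonempty closed b-bounded subset of a Minkowski space. Then bh₁(S) = ⋂ {int(B(x,1)) : S ⊆ int(B(x,1))}, the intersection of all open unit balls whose closed interiors contain S. -/
open Metric Set

/-- The ball hull of `S`: intersection of all closed balls of radius 1 containing `S`. -/
def ballHull {E : Type*} [NormedAddCommGroup E] (S : Set E) : Set E :=
  ⋂ x ∈ {x : E | S ⊆ closedBall x 1}, closedBall x 1

/-- The circumradius of `S`: the least `r ≥ 0` such that `S` is contained in some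
closed ball of radius `r`. -/
noncomputable def circumradius {E : Type*} [NormedAddCommGroup E] (S : Set E) : ℝ :=
  sInf {r : ℝ | 0 ≤ r ∧ ∃ x : E, S ⊆ closedBall x r}

/-- A b-convex body: a bounded nonempty set equal to its ball hull. -/
def IsBConvexBody {E : Type*} [NormedAddCommGroup E] (K : Set E) : Prop :=
  Bornology.IsBounded K ∧ K.Nonempty ∧ ballHull K = K

/-- `F` is an exposed b-face of `K`: `F = K ∩ S(y,1)` for some supporting sphere `S(y,1)`. -/
def IsExposedBFace {E : Type*} [NormedAddCommGroup E] (K F : Set E) : Prop :=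
  ∃ y : E, K ⊆ closedBall y 1 ∧ (K ∩ sphere y 1).Nonempty ∧ F = K ∩ sphere y 1

/-- The set of b-exposed points of `K`. -/
def bExp {E : Type*} [NormedAddCommGroup E] (K : Set E) : Set E :=
  {x : E | ∃ y : E, K ⊆ closedBall y 1 ∧ K ∩ sphere y 1 = {x}}

/-!
Both inclusions move the centre of a ball slightly. Given `S ⊆ B(x, r)` with `r < 1`, moving `x`
by `1 - r` directly away from a point `y` yields a unit ball which still contains `S` and whose
centre is farther from `y` by `1 - r`; so a point of the ball hull is within `r` of `x`, and
compactness supplies such an `r` whenever `S` lies in the open unit ball about `x`. Conversely, if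
`S ⊆ B(x, 1)`, moving `x` towards the centre of a ball of radius less than `1` containing `S`
brings `S` into the open unit ball, so every centre of a closed unit ball containing `S` is a limit
of centres of open unit balls containing `S`.
-/

theorem exists_subset_closedBall_lt_of_isCompact {X : Type*} [PseudoMetricSpace X] {s : Set X}
    {x : X} {r : ℝ} (hs : IsCompact s) (hr : 0 < r) (h : s ⊆ ball x r) :
    ∃ r' ∈ Ico 0 r, s ⊆ closedBall x r' := by
  obtain ⟨p, hp, hmax⟩ := (hs.insert x).exists_isMaxOn (insert_nonempty x s)
    (f := fun q => dist q x) (by fun_prop)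
  have hpr : p ∈ ball x r := insert_subset (mem_ball_self hr) h hp
  exact ⟨dist p x, ⟨dist_nonneg, hpr⟩, fun q hq => hmax (mem_insert_of_mem x hq)⟩

theorem isCompact_of_properSpace_of_isBounded {X : Type*} [PseudoMetricSpace X] {s : Set X}
    [ProperSpace s] (hs : Bornology.IsBounded s) : IsCompact s := by
  rw [isCompact_iff_compactSpace, compactSpace_iff_isBounded_univ,
    ← Bornology.isBounded_image_subtype_val, image_univ, Subtype.range_coe]
  exact hs

-- For unbounded `S`, `circumradius S` is the junk value `sInf ∅ = 0`.
theorem exists_subset_ball_of_circumradius_lt {E : Type*} [NormedAddCommGroup E] {S : Set E}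
    {r : ℝ} (hS : Bornology.IsBounded S) (h : circumradius S < r) : ∃ z, S ⊆ ball z r := by
  obtain ⟨R, hR, hSR⟩ := hS.subset_closedBall_lt 0 0
  have hne : {r : ℝ | 0 ≤ r ∧ ∃ x : E, S ⊆ closedBall x r}.Nonempty := ⟨R, hR.le, 0, hSR⟩
  obtain ⟨r', ⟨-, z, hz⟩, hr'⟩ := exists_lt_of_csInf_lt hne h
  exact ⟨z, hz.trans (closedBall_subset_ball hr')⟩

section NormedSpace

variable {E : Type*} [NormedAddCommGroup E] [NormedSpace ℝ E] {S : Set E} {x y z : E} {r : ℝ}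

theorem exists_dist_eq_and_dist_eq_dist_add {δ : ℝ} (hδ : 0 ≤ δ) (hyx : y ≠ x) :
    ∃ c, dist x c = δ ∧ dist y c = dist y x + δ := by
  have hpos : 0 < dist y x := dist_pos.2 hyx
  refine ⟨AffineMap.lineMap y x (1 + δ / dist y x), ?_, ?_⟩
  · rw [dist_right_lineMap, sub_add_cancel_left, norm_neg, Real.norm_of_nonneg (by positivity),
      div_mul_cancel₀ _ hpos.ne']
  · rw [dist_left_lineMap, Real.norm_of_nonneg (by positivity), add_mul, one_mul,
      div_mul_cancel₀ _ hpos.ne']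

theorem ballHull_subset_closedBall (hr₀ : 0 ≤ r) (hr₁ : r ≤ 1) (hS : S ⊆ closedBall x r) :
    ballHull S ⊆ closedBall x r := by
  intro y hy
  rcases eq_or_ne y x with rfl | hyx
  · exact mem_closedBall_self hr₀
  obtain ⟨c, hxc, hyc⟩ := exists_dist_eq_and_dist_eq_dist_add (sub_nonneg.2 hr₁) hyx
  have hSc : S ⊆ closedBall c 1 := hS.trans (closedBall_subset_closedBall' (by linarith))
  have hyc' : dist y c ≤ 1 := mem_iInter₂.1 hy c hSc
  rw [mem_closedBall]
  linarith

theorem ballHull_subset_ball (hS : IsCompact S) (h : S ⊆ ball x 1) : ballHull S ⊆ ball x 1 := by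
  obtain ⟨r, ⟨hr₀, hr₁⟩, hSr⟩ := exists_subset_closedBall_lt_of_isCompact hS one_pos h
  exact (ballHull_subset_closedBall hr₀ hr₁.le hSr).trans (closedBall_subset_ball hr₁)

theorem subset_ball_of_mem_openSegment (hx : S ⊆ closedBall x r) (hz : S ⊆ ball z r) {c : E}
    (hc : c ∈ openSegment ℝ x z) : S ⊆ ball c r := by
  intro q hq
  have hr : r ≠ 0 := (pos_of_mem_ball (hz hq)).ne'
  have hxq : x ∈ closedBall q r := mem_closedBall_comm.1 (hx hq)
  have hzq : z ∈ interior (closedBall q r) :=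
    ball_subset_interior_closedBall (mem_ball_comm.1 (hz hq))
  have hcq := (convex_closedBall q r).openSegment_self_interior_subset_interior hxq hzq hc
  rw [interior_closedBall q hr] at hcq
  exact mem_ball_comm.1 hcq

theorem mem_closure_setOf_subset_ball (hx : S ⊆ closedBall x r) (hz : S ⊆ ball z r) :
    x ∈ closure {c | S ⊆ ball c r} := by
  have hseg : openSegment ℝ x z ⊆ {c | S ⊆ ball c r} :=
    fun _ hc => subset_ball_of_mem_openSegment hx hz hc
  apply closure_mono hseg
  rw [closure_openSegment]
  exact left_mem_segment ℝ x z

theorem iInter_ball_subset_closedBall (hx : S ⊆ closedBall x r) (hz : S ⊆ ball z r) :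
    ⋂ c ∈ {c | S ⊆ ball c r}, ball c r ⊆ closedBall x r := by
  intro y hy
  have hcenters : {c | S ⊆ ball c r} ⊆ closedBall y r :=
    fun c hc => ball_subset_closedBall (mem_ball_comm.1 (mem_iInter₂.1 hy c hc))
  exact mem_closedBall_comm.1
    (closure_minimal hcenters isClosed_closedBall (mem_closure_setOf_subset_ball hx hz))

end NormedSpace

theorem stmt_7_general {E : Type*} [NormedAddCommGroup E] [NormedSpace ℝ E]
    (S : Set E) [ProperSpace S] (hbb : circumradius S < 1) :
    ballHull S =
      ⋂ x ∈ {x : E | S ⊆ interior (closedBall x 1)}, interior (closedBall x 1) := by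
  simp only [interior_closedBall _ (one_ne_zero : (1 : ℝ) ≠ 0)]
  refine (subset_iInter₂ fun x hx => ?_).antisymm (subset_iInter₂ fun x hx => ?_)
  · have hS : IsCompact S := isCompact_of_properSpace_of_isBounded (isBounded_ball.subset hx)
    exact ballHull_subset_ball hS hx
  · obtain ⟨z, hz⟩ := exists_subset_ball_of_circumradius_lt (isBounded_closedBall.subset hx) hbb
    exact iInter_ball_subset_closedBall hx hz

theorem stmt_7 {E : Type*} [NormedAddCommGroup E] [NormedSpace ℝ E]
    [FiniteDimensional ℝ E] [Nontrivial E]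
    (S : Set E) (hS : S.Nonempty) (hcl : IsClosed S) (hbb : circumradius S < 1) :
    ballHull S =
      ⋂ x ∈ {x : E | S ⊆ interior (closedBall x 1)}, interior (closedBall x 1) := by
  have : ProperSpace E := FiniteDimensional.proper_real E
  have : ProperSpace S := .of_isClosed hcl
  exact stmt_7_general S hbb
end

section
/- Let S be a nonempty subset of a Minkowski space of dimension n such that the dimension of the affine hull of bh₁(S) belongs to {0, 1, n−1, n}. Then bh₁(S) = cl(⋃ {bh₁(F) : F ⊆ S finite}), i.e., the ball hull of S is the closure of the union of the ball hulls of all finite subsets of S. -/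
open Metric Set

/- If `ballHull S` lies on a line and is bigger than the closed convex hull of `S`, then some nonzero
translate `S + u` stays inside `ballHull S`, so the set of centers of unit balls containing `S` is
invariant under translation by `-u`, although it is nonempty and bounded. If `ballHull S` has
codimension at most one, every point `y` of its relative interior lies in the ball hull of a finite
subset of `S`: a unit ball containing `S` with `y` on its boundary is, near `y`, a half-space, since a
neighborhood of `y` in a hyperplane is part of that boundary; hence near its center the condition of
containing `y` follows from that of containing one fixed point of `S`, and compactness applies. -/

open Filter Topology

section IntrinsicInterior

variable {V : Type*} [AddCommGroup V] [Module ℝ V] [TopologicalSpace V]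

lemma mem_intrinsicInterior_iff_mem_nhdsWithin {K : Set V} {y : V} :
    y ∈ intrinsicInterior ℝ K ↔ y ∈ affineSpan ℝ K ∧ K ∈ 𝓝[affineSpan ℝ K] y := by
  simp only [mem_intrinsicInterior, mem_interior_iff_mem_nhds]
  constructor
  · rintro ⟨z, hz, rfl⟩
    exact ⟨z.2, preimage_coe_mem_nhds_subtype.1 hz⟩
  · rintro ⟨hy, hK⟩
    exact ⟨⟨y, hy⟩, preimage_coe_mem_nhds_subtype.2 hK, rfl⟩

variable [IsTopologicalAddGroup V] [ContinuousSMul ℝ V]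

lemma lineMap_mem_intrinsicInterior {K : Set V} (hK : Convex ℝ K) {k y : V} (hk : k ∈ K)
    (hy : y ∈ intrinsicInterior ℝ K) {t : ℝ} (ht : t ∈ Ioc 0 1) :
    AffineMap.lineMap k y t ∈ intrinsicInterior ℝ K := by
  rw [mem_intrinsicInterior_iff_mem_nhdsWithin] at hy ⊢
  have hkA : k ∈ affineSpan ℝ K := subset_affineSpan ℝ K hk
  refine ⟨AffineMap.lineMap_mem t hkA hy.1, ?_⟩
  have hinv (z : V) :
      AffineMap.lineMap k (AffineMap.lineMap k z t⁻¹) t = z ∧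
        AffineMap.lineMap k (AffineMap.lineMap k z t) t⁻¹ = z := by
    simp [AffineMap.lineMap_apply, smul_smul, ht.1.ne']
  have hcont : ContinuousWithinAt (fun z ↦ AffineMap.lineMap k z t⁻¹) (affineSpan ℝ K)
      (AffineMap.lineMap k y t) := by
    simp only [AffineMap.lineMap_apply_module']
    fun_prop
  have hmaps : MapsTo (fun z ↦ AffineMap.lineMap k z t⁻¹) (affineSpan ℝ K : Set V)
      (affineSpan ℝ K) := fun z hz ↦ AffineMap.lineMap_mem t⁻¹ hkA hz
  have htendsto := hcont.tendsto_nhdsWithin hmaps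
  rw [(hinv y).2] at htendsto
  filter_upwards [htendsto hy.2] with z hz
  rw [← (hinv z).1]
  exact hK.lineMap_mem hk hz ⟨ht.1.le, ht.2⟩

lemma subset_closure_intrinsicInterior {K : Set V} (hK : Convex ℝ K)
    (hne : (intrinsicInterior ℝ K).Nonempty) : K ⊆ closure (intrinsicInterior ℝ K) := by
  intro k hk
  obtain ⟨y, hy⟩ := hne
  have hlim : Tendsto (fun t : ℝ ↦ AffineMap.lineMap k y t) (𝓝[>] 0) (𝓝 k) := by
    have hcont : Continuous fun t : ℝ ↦ AffineMap.lineMap k y t :=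
      AffineMap.lineMap_continuous
    simpa using (hcont.tendsto 0).mono_left nhdsWithin_le_nhds
  refine mem_closure_of_tendsto hlim ?_
  filter_upwards [Ioc_mem_nhdsGT zero_lt_one] with t ht
  exact lineMap_mem_intrinsicInterior hK hk hy ht

lemma direction_affineSpan_le_ker_of_isMaxOn {K : Set V} {y : V}
    (hy : y ∈ intrinsicInterior ℝ K) {g : Module.Dual ℝ V} (hg : IsMaxOn g K y) :
    (affineSpan ℝ K).direction ≤ g.ker := by
  intro w hw
  obtain ⟨hyA, hK⟩ := mem_intrinsicInterior_iff_mem_nhdsWithin.1 hy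
  have hline : Tendsto (fun t : ℝ ↦ y + t • w) (𝓝 0) (𝓝[affineSpan ℝ K] y) := by
    refine tendsto_nhdsWithin_iff.2 ⟨?_, Eventually.of_forall fun t ↦ ?_⟩
    · have hcont : Continuous fun t : ℝ ↦ y + t • w := by fun_prop
      simpa using hcont.tendsto 0
    · rw [add_comm]
      exact AffineSubspace.vadd_mem_of_mem_direction (Submodule.smul_mem _ t hw) hyA
  have hderiv : HasLineDerivAt ℝ g (g w) y w := by
    simpa [HasLineDerivAt] using ((hasDerivAt_id (0 : ℝ)).mul_const (g w)).const_add (g y)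
  exact hg.isExtr.hasLineDerivAt_eq_zero hderiv (hline hK)

lemma direction_affineSpan_eq_ker_of_isMaxOn [FiniteDimensional ℝ V] {K : Set V}
    (hdim : Module.finrank ℝ V ≤ Module.finrank ℝ (affineSpan ℝ K).direction + 1) {y : V}
    (hy : y ∈ intrinsicInterior ℝ K) {g : Module.Dual ℝ V} (hg0 : g ≠ 0) (hg : IsMaxOn g K y) :
    (affineSpan ℝ K).direction = g.ker := by
  refine Submodule.eq_of_le_of_finrank_le (direction_affineSpan_le_ker_of_isMaxOn hy hg) ?_
  have := Module.Dual.finrank_ker_add_one_of_ne_zero hg0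
  omega

end IntrinsicInterior

section Collinear

variable {V : Type*} [AddCommGroup V] [Module ℝ V] [TopologicalSpace V]
  [IsTopologicalAddGroup V] [ContinuousSMul ℝ V] [LocallyConvexSpace ℝ V]

lemma exists_ne_zero_forall_add_mem_of_collinear {K S : Set V} (hK : Collinear ℝ K)
    (hconv : Convex ℝ K) (hSK : S ⊆ K) (hS : S.Nonempty) {y : V} (hyK : y ∈ K)
    (hyS : y ∉ closure (convexHull ℝ S)) : ∃ u ≠ 0, ∀ s ∈ S, s + u ∈ K := by
  obtain ⟨f, c, hfc, hcy⟩ := geometric_hahn_banach_closed_point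
    (convex_convexHull ℝ S).closure isClosed_closure hyS
  have hfS : ∀ s ∈ S, f s < c := fun s hs ↦ hfc s (subset_closure (subset_convexHull ℝ S hs))
  obtain ⟨v, hv⟩ := (collinear_iff_of_mem hyK).1 hK
  have hfv : f v ≠ 0 := by
    obtain ⟨s, hs⟩ := hS
    obtain ⟨r, rfl⟩ := hv s (hSK hs)
    intro h
    have := hfS _ hs
    simp only [vadd_eq_add, map_add, map_smul, h, smul_zero, zero_add] at this
    linarith
  set u : V := ((f y - c) / f v) • v with hu
  have hfu : f u = f y - c := by simp [hu, hfv]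
  refine ⟨u, fun h ↦ ?_, fun s hs ↦ ?_⟩
  · rw [h, map_zero] at hfu
    linarith
  · have hsy : 0 < f (y - s) := by rw [map_sub]; linarith [hfS s hs]
    have hu_eq : u = ((f y - c) / f (y - s)) • (y - s) := by
      obtain ⟨r, rfl⟩ := hv s (hSK hs)
      have hys : y - (r • v +ᵥ y) = (-r) • v := by simp [vadd_eq_add]
      rw [hys, map_smul, smul_eq_mul] at hsy ⊢
      have hr : r ≠ 0 := by rintro rfl; simp at hsy
      rw [hu, smul_smul]
      congr 1
      field_simp
    rw [hu_eq]
    refine hconv.add_smul_sub_mem (hSK hs) hyK ⟨div_nonneg (by linarith) hsy.le, ?_⟩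
    rw [div_le_one hsy, map_sub]
    linarith [hfS s hs]

end Collinear

section BallHull

variable {E : Type*} [NormedAddCommGroup E] {S T : Set E} {y : E}

lemma mem_ballHull : y ∈ ballHull S ↔ ∀ x, S ⊆ closedBall x 1 → y ∈ closedBall x 1 := by
  simp only [ballHull, mem_iInter, mem_ofPred_eq]

lemma subset_ballHull (S : Set E) : S ⊆ ballHull S :=
  fun _ hs ↦ mem_ballHull.2 fun _ hx ↦ hx hs

lemma ballHull_mono (h : S ⊆ T) : ballHull S ⊆ ballHull T :=
  fun _ hy ↦ mem_ballHull.2 fun x hx ↦ mem_ballHull.1 hy x (h.trans hx)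

lemma isClosed_ballHull (S : Set E) : IsClosed (ballHull S) :=
  isClosed_biInter fun _ _ ↦ isClosed_closedBall

lemma ballHull_subset_closedBall_s14 {x : E} (hx : S ⊆ closedBall x 1) :
    ballHull S ⊆ closedBall x 1 :=
  fun _ hy ↦ mem_ballHull.1 hy x hx

lemma exists_subset_closedBall_of_ballHull_ne_univ (h : ballHull S ≠ univ) :
    ∃ x, S ⊆ closedBall x 1 := by
  contrapose! h
  exact eq_univ_of_forall fun y ↦ mem_ballHull.2 fun x hx ↦ absurd hx (h x)

lemma convex_ballHull [NormedSpace ℝ E] (S : Set E) : Convex ℝ (ballHull S) :=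
  convex_iInter₂ fun x _ ↦ convex_closedBall x 1

lemma convexHull_subset_iUnion_ballHull [NormedSpace ℝ E] (S : Set E) :
    convexHull ℝ S ⊆ ⋃ F ∈ {F : Set E | F ⊆ S ∧ F.Finite}, ballHull F := by
  rw [convexHull_eq_union_convexHull_finite_subsets]
  refine iUnion₂_subset fun F hF ↦ ?_
  exact (convexHull_min (subset_ballHull _) (convex_ballHull _)).trans
    (subset_biUnion_of_mem (u := ballHull) ⟨hF, F.finite_toSet⟩)

lemma eq_zero_of_forall_add_mem_ballHull [NormedSpace ℝ E] (hS : S.Nonempty) {x u : E}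
    (hx : S ⊆ closedBall x 1) (hu : ∀ s ∈ S, s + u ∈ ballHull S) : u = 0 := by
  have hcenter (n : ℕ) : S ⊆ closedBall (x - n • u) 1 := by
    induction n with
    | zero => simpa using hx
    | succ n ih =>
      intro s hs
      have := mem_ballHull.1 (hu s hs) _ ih
      rw [mem_closedBall_iff_norm] at this ⊢
      convert this using 2
      rw [succ_nsmul]
      abel
  obtain ⟨s, hs⟩ := hS
  have hbound (n : ℕ) : n • ‖u‖ ≤ 2 := by
    calc n • ‖u‖ = dist x (x - n • u) := by simp [norm_smul, ← Nat.cast_smul_eq_nsmul ℝ]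
      _ ≤ dist s x + dist s (x - n • u) := dist_triangle_left _ _ _
      _ ≤ 1 + 1 := add_le_add (hx hs) (hcenter n hs)
      _ = 2 := one_add_one_eq_two
  by_contra hne
  obtain ⟨n, hn⟩ := exists_lt_nsmul (norm_pos_iff.2 hne) 2
  exact (hbound n).not_gt hn

lemma ballHull_eq_closure_convexHull_of_collinear [NormedSpace ℝ E] (hS : S.Nonempty) {x : E}
    (hx : S ⊆ closedBall x 1) (hcol : Collinear ℝ (ballHull S)) :
    ballHull S = closure (convexHull ℝ S) := by
  refine Subset.antisymm (fun y hy ↦ ?_)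
    (closure_minimal (convexHull_min (subset_ballHull S) (convex_ballHull S)) (isClosed_ballHull S))
  by_contra hyS
  obtain ⟨u, hu0, hu⟩ := exists_ne_zero_forall_add_mem_of_collinear hcol (convex_ballHull S)
    (subset_ballHull S) hS hy hyS
  exact hu0 (eq_zero_of_forall_add_mem_ballHull hS hx hu)

lemma exists_finite_mem_ballHull [ProperSpace E] {s : E} (hs : s ∈ S)
    (hy : ∀ x, S ⊆ closedBall x 1 →
      ∀ᶠ z in 𝓝 x, s ∈ closedBall z 1 → y ∈ closedBall z 1) :
    ∃ F ⊆ S, F.Finite ∧ y ∈ ballHull F := by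
  set U : Set E := interior {z | s ∈ closedBall z 1 → y ∈ closedBall z 1}
  have hempty : (closedBall s 1 \ U) ∩ ⋂ p : S, closedBall (p : E) 1 = ∅ := by
    refine eq_empty_of_forall_notMem fun x hx ↦ hx.1.2 (mem_interior_iff_mem_nhds.2 (hy x ?_))
    exact fun p hp ↦ mem_closedBall_comm.1 (mem_iInter.1 hx.2 ⟨p, hp⟩)
  obtain ⟨G, hG⟩ := ((isCompact_closedBall s 1).diff isOpen_interior).elim_finite_subfamily_closed
    (fun p : S ↦ closedBall (p : E) 1) (fun _ ↦ isClosed_closedBall) hempty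
  refine ⟨insert s ((↑) '' (G : Set S)), insert_subset hs (Subtype.coe_image_subset S _),
    (G.finite_toSet.image _).insert s, mem_ballHull.2 fun z hz ↦ ?_⟩
  have hsz : s ∈ closedBall z 1 := hz (mem_insert s _)
  have hzU : z ∈ U := by
    by_contra hzU
    refine hG.subset ⟨⟨mem_closedBall_comm.1 hsz, hzU⟩, mem_iInter₂.2 fun p hp ↦ ?_⟩
    exact mem_closedBall_comm.1 (hz (mem_insert_of_mem s (mem_image_of_mem _ hp)))
  exact interior_subset hzU hsz

end BallHull

section Codimension

variable {E : Type*} [NormedAddCommGroup E] [NormedSpace ℝ E]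

lemma eventually_norm_le_one_of_apply_le_one {g : StrongDual ℝ E} {p : E} (hp : g p = 1)
    (hface : ∀ᶠ q in 𝓝 p, g q = 1 → ‖q‖ ≤ 1) : ∀ᶠ q in 𝓝 p, g q ≤ 1 → ‖q‖ ≤ 1 := by
  have hrescale : Tendsto (fun q ↦ (g q)⁻¹ • q) (𝓝 p) (𝓝 p) := by
    have hcont : ContinuousAt (fun q ↦ (g q)⁻¹ • q) p :=
      (g.continuous.continuousAt.inv₀ (by simp [hp])).smul continuousAt_id
    simpa [ContinuousAt, hp] using hcont
  have hpos : ∀ᶠ q in 𝓝 p, 0 < g q :=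
    g.continuous.continuousAt.eventually_const_lt (by simp [hp])
  filter_upwards [hrescale.eventually hface, hpos] with q hq hgq hq1
  have hle : ‖(g q)⁻¹ • q‖ ≤ 1 := hq (by simp [hgq.ne'])
  rw [norm_smul, norm_inv, Real.norm_of_nonneg hgq.le, inv_mul_le_one₀ hgq] at hle
  exact hle.trans hq1

lemma eventually_mem_closedBall_of_direction_eq_ker {K : Set E} {g : StrongDual ℝ E}
    (hker : (affineSpan ℝ K).direction = g.ker) {x y : E} (hy : y ∈ intrinsicInterior ℝ K)
    (hx : K ⊆ closedBall x 1) (hgyx : g (y - x) = 1) :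
    ∀ᶠ z in 𝓝 x, g (y - z) ≤ 1 → y ∈ closedBall z 1 := by
  obtain ⟨hyA, hKy⟩ := mem_intrinsicInterior_iff_mem_nhdsWithin.1 hy
  have hface : ∀ᶠ q in 𝓝 (y - x), g q = 1 → ‖q‖ ≤ 1 := by
    have htendsto : Tendsto (fun q ↦ q + x) (𝓝 (y - x)) (𝓝 y) := by
      simpa using (continuous_add_const x).tendsto (y - x)
    filter_upwards [htendsto.eventually (mem_nhdsWithin_iff_eventually.1 hKy)] with q hq hgq
    have hdir : q + x - y ∈ (affineSpan ℝ K).direction := by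
      rw [hker, ← sub_sub_eq_add_sub]
      simp [hgq, hgyx]
    have hqA : q + x ∈ affineSpan ℝ K := by
      simpa using AffineSubspace.vadd_mem_of_mem_direction hdir hyA
    simpa using hx (hq hqA)
  have hcont : ContinuousAt (fun z ↦ y - z) x := by fun_prop
  simpa only [mem_closedBall_iff_norm] using
    hcont.eventually (eventually_norm_le_one_of_apply_le_one hgyx hface)

lemma eventually_mem_closedBall_of_mem_intrinsicInterior [FiniteDimensional ℝ E] {K : Set E}
    (hdim : Module.finrank ℝ E ≤ Module.finrank ℝ (affineSpan ℝ K).direction + 1) {s x y : E}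
    (hs : s ∈ K) (hy : y ∈ intrinsicInterior ℝ K) (hx : K ⊆ closedBall x 1) :
    ∀ᶠ z in 𝓝 x, s ∈ closedBall z 1 → y ∈ closedBall z 1 := by
  have hyK : y ∈ K := intrinsicInterior_subset hy
  rcases (mem_closedBall_iff_norm.1 (hx hyK)).lt_or_eq with hlt | heq
  · have hcont : ContinuousAt (fun z ↦ ‖y - z‖) x := by fun_prop
    filter_upwards [hcont.eventually_lt_const hlt] with z hz _
    exact mem_closedBall_iff_norm.2 hz.le
  obtain ⟨g, hg_norm, hgyx⟩ := exists_dual_vector ℝ (y - x) (by simp [heq])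
  replace hgyx : g (y - x) = 1 := by simpa [heq] using hgyx
  have hg_le (z : E) : g z ≤ ‖z‖ := by
    simpa [hg_norm] using (le_abs_self _).trans (g.le_opNorm z)
  have hmax : IsMaxOn g K y := fun k hk ↦ by
    have hgk : g (k - x) ≤ g (y - x) :=
      (hg_le _).trans ((mem_closedBall_iff_norm.1 (hx hk)).trans hgyx.ge)
    simpa using hgk
  have hg0 : g ≠ 0 := fun h ↦ by simp [h] at hgyx
  have hker : (affineSpan ℝ K).direction = g.ker :=
    direction_affineSpan_eq_ker_of_isMaxOn hdim hy (ContinuousLinearMap.coe_injective.ne hg0) hmax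
  have hsy : g (s - y) = 0 := by
    have hmem : s - y ∈ (affineSpan ℝ K).direction :=
      AffineSubspace.vsub_mem_direction (subset_affineSpan ℝ K hs) (subset_affineSpan ℝ K hyK)
    rwa [hker] at hmem
  filter_upwards [eventually_mem_closedBall_of_direction_eq_ker hker hy hx hgyx] with z hz hsz
  apply hz
  calc g (y - z) = g (s - z) - g (s - y) := by rw [← map_sub, sub_sub_sub_cancel_left]
    _ = g (s - z) := by rw [hsy, sub_zero]
    _ ≤ ‖s - z‖ := hg_le _
    _ ≤ 1 := mem_closedBall_iff_norm.1 hsz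

lemma ballHull_subset_closure_iUnion_of_finrank_le [FiniteDimensional ℝ E] {S : Set E}
    (hS : S.Nonempty) (hdim : Module.finrank ℝ E ≤
      Module.finrank ℝ (affineSpan ℝ (ballHull S)).direction + 1) :
    ballHull S ⊆ closure (⋃ F ∈ {F : Set E | F ⊆ S ∧ F.Finite}, ballHull F) := by
  have : ProperSpace E := FiniteDimensional.proper_real E
  have hne : (ballHull S).Nonempty := hS.mono (subset_ballHull S)
  refine (subset_closure_intrinsicInterior (convex_ballHull S)
    (hne.intrinsicInterior (convex_ballHull S))).trans (closure_mono fun y hy ↦ ?_)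
  obtain ⟨s, hs⟩ := hS
  obtain ⟨F, hFS, hF, hyF⟩ := exists_finite_mem_ballHull hs fun x hx ↦
    eventually_mem_closedBall_of_mem_intrinsicInterior hdim (subset_ballHull S hs) hy
      (ballHull_subset_closedBall_s14 hx)
  exact mem_biUnion (show F ∈ {F : Set E | F ⊆ S ∧ F.Finite} from ⟨hFS, hF⟩) hyF

end Codimension

theorem stmt_14 {E : Type*} [NormedAddCommGroup E] [NormedSpace ℝ E]
    [FiniteDimensional ℝ E] [Nontrivial E]
    (S : Set E) (hS : S.Nonempty)
    (hdim : Module.finrank ℝ (affineSpan ℝ (ballHull S)).direction ∈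
      ({0, 1, Module.finrank ℝ E - 1, Module.finrank ℝ E} : Set ℕ)) :
    ballHull S = closure (⋃ F ∈ {F : Set E | F ⊆ S ∧ F.Finite}, ballHull F) := by
  refine Subset.antisymm ?_
    (closure_minimal (iUnion₂_subset fun F hF ↦ ballHull_mono hF.1) (isClosed_ballHull S))
  by_cases hcodim : Module.finrank ℝ E ≤
      Module.finrank ℝ (affineSpan ℝ (ballHull S)).direction + 1
  · exact ballHull_subset_closure_iUnion_of_finrank_le hS hcodim
  have hcol : Collinear ℝ (ballHull S) := by
    rw [collinear_iff_finrank_le_one, ← direction_affineSpan]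
    simp only [mem_insert_iff, mem_singleton_iff] at hdim
    omega
  obtain ⟨x, hx⟩ := exists_subset_closedBall_of_ballHull_ne_univ (S := S) fun huniv ↦ by
    rw [huniv, AffineSubspace.span_univ, AffineSubspace.direction_top, finrank_top] at hcodim
    omega
  rw [ballHull_eq_closure_convexHull_of_collinear hS hx hcol]
  exact closure_mono (convexHull_subset_iUnion_ballHull S)
end
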